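/- arXiv:1410.3814 — 3 statements merged into one kernel-verified Lean document; each statement's English description precedes it below -/
import Mathlib

section
/- A separable polynomial f(x) over a field F is indecomposable (cannot be written as g(h(x)) with deg g, deg h > 1) if and only if the Galois group of f(x) − t over F(t) acts primitively on the roots of f(x) − t. -/
open Polynomial MulAction

/-!
Let `x` be a root of `f(x) - t` in its splitting field. Since `t = f(x)`, the element `x` is
transcendental over `F` and `F(t)(x) = F(x)`, so the stabilizer of `x` in the Galois group
corresponds to the extension `F(f(x)) ⊆ F(x)` and the action is primitive if and only if no
field lies strictly in between. By Lüroth's theorem an intermediate field is `F(s)` for a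
rational function `s`, which a Möbius transformation moves to have a pole at infinity. As `f(x)`
is a nonconstant element of `F(s)`, it has a pole wherever `s` does, so `s` has no finite pole:
it is a polynomial `h`. Finally `f(x) ∈ F(h(x))` means that `f = g ∘ h` for a polynomial `g`,
whose degree and that of `h` are the degrees of the two steps of `F(f(x)) ⊆ F(h(x)) ⊆ F(x)`.
-/

open IntermediateField

section Valuation

variable {K L Γ Γ' : Type*} [Field K] [Field L] [Algebra K L]
  [LinearOrderedCommGroupWithZero Γ] [LinearOrderedCommGroupWithZero Γ']

lemma one_lt_valuation_aeval_div_aeval_iff (v : Valuation L Γ) [v.IsTrivialOn K] {s : L}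
    (hs : 1 < v s) {p q : K[X]} (hp : p ≠ 0) (hq : q ≠ 0) :
    1 < v (aeval s p / aeval s q) ↔ q.natDegree < p.natDegree := by
  rw [map_div₀, valuation_aeval_eq_valuation_X_pow_natDegree_of_one_lt_valuation_X s hs hp,
    valuation_aeval_eq_valuation_X_pow_natDegree_of_one_lt_valuation_X s hs hq,
    one_lt_div₀ (pow_pos (zero_lt_one.trans hs) _), pow_lt_pow_iff_right₀ hs]

lemma one_lt_valuation_of_mem_adjoin (v : Valuation L Γ) [v.IsTrivialOn K] (w : Valuation L Γ')
    [w.IsTrivialOn K] {s y : L} (hy : y ∈ K⟮s⟯) (hvs : 1 < v s) (hvy : 1 < v y)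
    (hws : 1 < w s) : 1 < w y := by
  obtain ⟨p, q, rfl⟩ := (mem_adjoin_simple_iff K y).mp hy
  have hp : p ≠ 0 := by rintro rfl; simp at hvy
  have hq : q ≠ 0 := by rintro rfl; simp at hvy
  rw [one_lt_valuation_aeval_div_aeval_iff v hvs hp hq] at hvy
  rwa [one_lt_valuation_aeval_div_aeval_iff w hws hp hq]

instance isTrivialOn_valuation_heightOneSpectrum {R : Type*} [CommRing R] [IsDedekindDomain R]
    [Algebra K R] [Algebra R L] [IsFractionRing R L] [IsScalarTower K R L]
    (P : IsDedekindDomain.HeightOneSpectrum R) : (P.valuation L).IsTrivialOn K where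
  eq_one a ha := by
    rw [IsScalarTower.algebraMap_apply K R L, P.valuation_eq_one_iff_notMem]
    exact fun haP ↦ P.isPrime.ne_top <|
      Ideal.eq_top_of_isUnit_mem _ haP (ha.isUnit.map (algebraMap K R))

lemma one_lt_inftyValuation_of_intDegree_pos [DecidableEq (RatFunc K)] {r : RatFunc K}
    (hr : 0 < r.intDegree) : 1 < RatFunc.inftyValuation K r := by
  have hr0 : r ≠ 0 := by
    rintro rfl
    simp at hr
  rw [RatFunc.inftyValuation_apply, RatFunc.inftyValuation_of_nonzero K hr0]
  simpa [← WithZero.exp_zero] using hr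

end Valuation

section AdjoinSimple

variable {K L : Type*} [Field K] [Field L] [Algebra K L]

lemma adjoin_simple_inv_sub_algebraMap (r : L) (c : K) :
    K⟮(r - algebraMap K L c)⁻¹⟯ = K⟮r⟯ := by
  refine le_antisymm ?_ ?_ <;> rw [adjoin_simple_le_iff]
  · exact inv_mem (sub_mem (mem_adjoin_simple_self K r) (IntermediateField.algebraMap_mem _ c))
  · simpa using add_mem (inv_mem (mem_adjoin_simple_self K (r - algebraMap K L c)⁻¹))
      (IntermediateField.algebraMap_mem _ c)

lemma exists_isCoprime_of_mem_adjoin_simple {s y : L} (hy : y ∈ K⟮s⟯) :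
    ∃ p q : K[X], IsCoprime p q ∧ y * aeval s q = aeval s p := by
  classical
  obtain ⟨p, q, rfl⟩ := (mem_adjoin_simple_iff K y).mp hy
  obtain ⟨p', q', hp, hq, hunit⟩ := extract_gcd p q
  generalize gcd p q = d at hp hq
  subst hp hq
  by_cases hdq : aeval s (d * q') = 0
  · exact ⟨0, 1, isCoprime_one_right, by simp [hdq]⟩
  refine ⟨p', q', (gcd_isUnit_iff p' q').mp hunit, ?_⟩
  rw [map_mul, mul_eq_zero, not_or] at hdq
  rw [map_mul, map_mul, mul_div_mul_left _ _ hdq.1, div_mul_cancel₀ _ hdq.2]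

end AdjoinSimple

section PolynomialLuroth

variable {K : Type*} [Field K]

lemma exists_adjoin_eq_intDegree_pos {r : RatFunc K} (hr : ∀ c, r ≠ RatFunc.C c) :
    ∃ s : RatFunc K, K⟮s⟯ = K⟮r⟯ ∧ 0 < s.intDegree := by
  rcases lt_or_ge r.denom.natDegree r.num.natDegree with hlt | hge
  · exact ⟨r, rfl, by simpa [RatFunc.intDegree] using hlt⟩
  obtain ⟨c, hc⟩ : ∃ c, r.num /ₘ r.denom = C c :=
    ⟨_, eq_C_of_natDegree_eq_zero (by rw [natDegree_divByMonic _ r.monic_denom]; lia)⟩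
  have hdenom : algebraMap K[X] (RatFunc K) r.denom ≠ 0 := by simpa using r.denom_ne_zero
  have hsub : r - RatFunc.C c =
      algebraMap K[X] (RatFunc K) (r.num %ₘ r.denom) / algebraMap K[X] (RatFunc K) r.denom := by
    nth_rw 1 [← r.num_div_denom, ← modByMonic_add_div r.num r.denom, hc]
    rw [map_add, map_mul, RatFunc.algebraMap_C, add_div, mul_div_cancel_left₀ _ hdenom,
      add_sub_cancel_right]
  have hmod : r.num %ₘ r.denom ≠ 0 := fun h ↦ hr c (by simpa [h, sub_eq_zero] using hsub)
  have hlt := natDegree_lt_natDegree hmod (degree_modByMonic_lt r.num r.monic_denom)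
  refine ⟨(r - algebraMap K (RatFunc K) c)⁻¹, adjoin_simple_inv_sub_algebraMap r c, ?_⟩
  rw [RatFunc.algebraMap_eq_C, hsub, inv_div, RatFunc.intDegree_div hdenom (by simpa using hmod)]
  simpa using hlt

lemma mem_range_algebraMap_of_intDegree_pos {s : RatFunc K} (hs : 0 < s.intDegree) {f : K[X]}
    (hf : 0 < f.natDegree) (hfs : algebraMap K[X] (RatFunc K) f ∈ K⟮s⟯) :
    s ∈ (algebraMap K[X] (RatFunc K)).range := by
  classical
  refine IsDedekindDomain.HeightOneSpectrum.mem_integers_of_valuation_le_one _ s fun P ↦ ?_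
  by_contra! hPs
  exact (P.valuation_le_one f).not_gt <| one_lt_valuation_of_mem_adjoin (RatFunc.inftyValuation K) _
    hfs (one_lt_inftyValuation_of_intDegree_pos hs)
    (one_lt_inftyValuation_of_intDegree_pos (by simpa using hf)) hPs

theorem exists_eq_adjoin_algebraMap (E : IntermediateField K (RatFunc K)) {f : K[X]}
    (hf : 0 < f.natDegree) (hfE : algebraMap K[X] (RatFunc K) f ∈ E) :
    ∃ h : K[X], E = K⟮algebraMap K[X] (RatFunc K) h⟯ := by
  have hE : E ≠ ⊥ := by
    rintro rfl
    obtain ⟨c, hc⟩ := mem_bot.mp hfE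
    rw [IsScalarTower.algebraMap_apply K K[X] (RatFunc K)] at hc
    simp [← RatFunc.algebraMap_injective K hc] at hf
  obtain ⟨s, hsE, hs⟩ := exists_adjoin_eq_intDegree_pos
    (r := RatFunc.Luroth.generator E) (fun c hc ↦ RatFunc.Luroth.generator_ne_C hE ⟨c, hc⟩)
  rw [← RatFunc.Luroth.eq_adjoin_generator] at hsE
  obtain ⟨h, rfl⟩ := mem_range_algebraMap_of_intDegree_pos hs hf (hsE ▸ hfE)
  exact ⟨h, hsE.symm⟩

lemma algebraMap_mem_adjoin_algebraMap_iff_exists_comp {f h : K[X]} :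
    algebraMap K[X] (RatFunc K) f ∈ K⟮algebraMap K[X] (RatFunc K) h⟯ ↔
      ∃ g : K[X], f = g.comp h := by
  simp only [comp_eq_aeval]
  constructor
  · intro hf
    obtain ⟨p, q, ⟨u, v, huv⟩, hpq⟩ := exists_isCoprime_of_mem_adjoin_simple hf
    simp only [aeval_algebraMap_apply, ← map_mul, (RatFunc.algebraMap_injective K).eq_iff] at hpq
    have hunit : IsUnit (aeval h q) := by
      refine .of_mul_eq_one (aeval h u * f + aeval h v) ?_
      rw [mul_add, mul_left_comm, mul_comm _ f, hpq, mul_comm _ (aeval h v), ← map_mul, ← map_mul,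
        ← map_add, huv, map_one]
    obtain ⟨b, hb, hbq⟩ := Polynomial.isUnit_iff.mp hunit
    refine ⟨C (↑hb.unit⁻¹ : K) * p, ?_⟩
    rw [map_mul, ← hpq, ← hbq, aeval_C, ← C_eq_algebraMap, mul_left_comm, ← C_mul,
      IsUnit.val_inv_mul, C_1, mul_one]
  · rintro ⟨g, rfl⟩
    rw [← aeval_algebraMap_apply]
    exact algebra_adjoin_le_adjoin K _ (aeval_mem_adjoin_singleton K _)

lemma finrank_adjoin_algebraMap (h : K[X]) :
    Module.finrank K⟮algebraMap K[X] (RatFunc K) h⟯ (RatFunc K) = h.natDegree := by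
  simp [RatFunc.finrank_eq_max_natDegree]

lemma adjoin_algebraMap_eq_top_iff {h : K[X]} :
    K⟮algebraMap K[X] (RatFunc K) h⟯ = ⊤ ↔ h.natDegree = 1 := by
  rw [← finrank_eq_one_iff_eq_top, finrank_adjoin_algebraMap]

lemma adjoin_algebraMap_comp_le (g h : K[X]) :
    K⟮algebraMap K[X] (RatFunc K) (g.comp h)⟯ ≤ K⟮algebraMap K[X] (RatFunc K) h⟯ :=
  adjoin_simple_le_iff.mpr (algebraMap_mem_adjoin_algebraMap_iff_exists_comp.mpr ⟨g, rfl⟩)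

lemma adjoin_algebraMap_comp_eq_iff {g h : K[X]} (hgh : 0 < (g.comp h).natDegree) :
    K⟮algebraMap K[X] (RatFunc K) (g.comp h)⟯ = K⟮algebraMap K[X] (RatFunc K) h⟯ ↔
      g.natDegree = 1 := by
  have : Module.Finite K⟮algebraMap K[X] (RatFunc K) (g.comp h)⟯ (RatFunc K) :=
    Module.finite_of_finrank_pos (by rwa [finrank_adjoin_algebraMap])
  rw [natDegree_comp] at hgh
  rw [← mul_eq_right₀ (Nat.pos_of_mul_pos_left hgh).ne', ← natDegree_comp,
    ← finrank_adjoin_algebraMap, ← finrank_adjoin_algebraMap]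
  exact ⟨fun h ↦ h ▸ rfl, eq_of_le_of_finrank_eq' (adjoin_algebraMap_comp_le g h)⟩

end PolynomialLuroth

section Indecomposable

variable {K : Type*} [Field K]

/-- `f` is indecomposable: it is not a composition of two polynomials of degree at least two. -/
def CompIndecomposable (f : K[X]) : Prop :=
  ¬ ∃ g h : K[X], 1 < g.natDegree ∧ 1 < h.natDegree ∧ f = g.comp h

lemma CompIndecomposable.of_natDegree_le_one {f : K[X]} (hf : f.natDegree ≤ 1) :
    CompIndecomposable f := by
  rintro ⟨g, h, hg, hh, rfl⟩
  rw [natDegree_comp] at hf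
  nlinarith

theorem isCoatom_adjoin_algebraMap_iff_compIndecomposable {f : K[X]} (hf : 1 < f.natDegree) :
    IsCoatom K⟮algebraMap K[X] (RatFunc K) f⟯ ↔ CompIndecomposable f := by
  have hpos : 0 < f.natDegree := zero_lt_one.trans hf
  constructor
  · rintro hcoatom ⟨g, h, hg, hh, rfl⟩
    rcases hcoatom.le_iff.mp (adjoin_algebraMap_comp_le g h) with htop | heq
    · exact hh.ne' (adjoin_algebraMap_eq_top_iff.mp htop)
    · exact hg.ne' ((adjoin_algebraMap_comp_eq_iff hpos).mp heq.symm)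
  · refine fun hind ↦ ⟨mt adjoin_algebraMap_eq_top_iff.mp hf.ne', fun E hE ↦ ?_⟩
    have hfE := adjoin_simple_le_iff.mp hE.le
    obtain ⟨h, rfl⟩ := exists_eq_adjoin_algebraMap E hpos hfE
    obtain ⟨g, rfl⟩ := algebraMap_mem_adjoin_algebraMap_iff_exists_comp.mp hfE
    by_contra htop
    rw [adjoin_algebraMap_eq_top_iff] at htop
    have hg := mt (adjoin_algebraMap_comp_eq_iff hpos).mpr hE.ne
    rw [natDegree_comp, CanonicallyOrderedAdd.mul_pos] at hpos
    exact hind ⟨g, h, by lia, by lia, rfl⟩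

end Indecomposable

section CovBy

variable {K L M : Type*} [Field K] [Field L] [Field M] [Algebra K L] [Algebra K M]

lemma map_covBy_map_iff (φ : L →ₐ[K] M) {E₁ E₂ : IntermediateField K L} :
    E₁.map φ ⋖ E₂.map φ ↔ E₁ ⋖ E₂ := by
  refine Set.OrdConnected.apply_covBy_apply_iff
    (OrderEmbedding.ofMapLEIff (IntermediateField.map φ) fun _ _ ↦ ?_) ⟨?_⟩
  · rw [map_le_iff_le_comap, comap_map]
  · rintro _ - _ ⟨E, rfl⟩ S ⟨-, hS⟩
    exact ⟨S.comap φ, map_comap_eq_self (hS.trans (by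
      rw [AlgHom.fieldRange_eq_map]; exact map_mono φ le_top))⟩

lemma restrictScalars_covBy_restrictScalars_iff [Algebra L M] [IsScalarTower K L M]
    {E₁ E₂ : IntermediateField L M} :
    E₁.restrictScalars K ⋖ E₂.restrictScalars K ↔ E₁ ⋖ E₂ := by
  refine Set.OrdConnected.apply_covBy_apply_iff
    (OrderEmbedding.ofMapLEIff (restrictScalars (L := M) (L' := L) K) fun _ _ ↦ .rfl) ⟨?_⟩
  rintro _ ⟨E, rfl⟩ _ - S ⟨hES, -⟩
  exact ⟨S.toSubfield.toIntermediateField fun r ↦ hES (E.algebraMap_mem r), rfl⟩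

end CovBy

section RatFuncTower

variable {F E : Type*} [Field F] [Field E] [Algebra F E] [Algebra (RatFunc F) E]
  [IsScalarTower F (RatFunc F) E]

lemma transcendental_algebraMap_ratFunc_X :
    Transcendental F (algebraMap (RatFunc F) E RatFunc.X) :=
  (transcendental_algebraMap_iff (algebraMap (RatFunc F) E).injective).mpr RatFunc.transcendental_X

lemma restrictScalars_adjoin_ratFunc (S : Set E) :
    (adjoin (RatFunc F) S).restrictScalars F =
      adjoin F ({algebraMap (RatFunc F) E RatFunc.X} ∪ S) := by
  let t := algebraMap (RatFunc F) E RatFunc.X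
  let e : RatFunc F ≃ₐ[F] F⟮t⟯ :=
    RatFunc.algEquivOfTranscendental t transcendental_algebraMap_ratFunc_X
  have he : IsScalarTower.toAlgHom F (RatFunc F) E = F⟮t⟯.val.comp e.toAlgHom := by
    apply IsLocalization.algHom_ext (nonZeroDivisors F[X])
    ext
    simp [e, t, Algebra.algHom]
  rw [← adjoin_adjoin_left]
  exact restrictScalars_adjoin_of_algEquiv e (congrArg DFunLike.coe he) S

variable {f : F[X]} {x : E}

theorem isAtom_adjoin_iff_isCoatom_adjoin_algebraMap
    (hx : aeval x f = algebraMap (RatFunc F) E RatFunc.X) :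
    IsAtom (RatFunc F)⟮x⟯ ↔ IsCoatom F⟮algebraMap F[X] (RatFunc F) f⟯ := by
  have hx' : Transcendental F x := (transcendental_aeval_iff.mp
    (hx ▸ transcendental_algebraMap_ratFunc_X)).1
  let φ : RatFunc F →ₐ[F] E :=
    F⟮x⟯.val.comp (RatFunc.algEquivOfTranscendental x hx').toAlgHom
  have hφ (p : F[X]) : φ (algebraMap F[X] (RatFunc F) p) = aeval x p := by
    simp [φ]
  have hbot : (⊥ : IntermediateField (RatFunc F) E).restrictScalars F =
      F⟮algebraMap F[X] (RatFunc F) f⟯.map φ := by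
    rw [← adjoin_empty, restrictScalars_adjoin_ratFunc, Set.union_empty, adjoin_map,
      Set.image_singleton, hφ, hx]
  have htop : (RatFunc F)⟮x⟯.restrictScalars F = (⊤ : IntermediateField F (RatFunc F)).map φ := by
    rw [← RatFunc.adjoin_X, adjoin_map, Set.image_singleton, ← RatFunc.algebraMap_X, hφ, aeval_X,
      restrictScalars_adjoin_ratFunc, ← hx, adjoin_union, sup_eq_right, adjoin_simple_le_iff]
    exact algebra_adjoin_le_adjoin F _ (aeval_mem_adjoin_singleton F x)
  rw [← bot_covBy_iff, ← covBy_top_iff, ← restrictScalars_covBy_restrictScalars_iff (K := F), hbot,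
    htop, map_covBy_map_iff]

end RatFuncTower

section Galois

lemma isCoatom_stabilizer_iff_isAtom_adjoin {K L : Type*} [Field K] [Field L] [Algebra K L]
    [FiniteDimensional K L] [IsGalois K L] (x : L) :
    IsCoatom (stabilizer Gal(L/K) x) ↔ IsAtom K⟮x⟯ := by
  have hstab : stabilizer Gal(L/K) x = K⟮x⟯.fixingSubgroup := by
    ext σ
    rw [mem_stabilizer_iff, IntermediateField.mem_fixingSubgroup_iff]
    exact ((forall_mem_adjoin_smul_eq_self_iff K (S := {x}) σ).trans (by simp)).symm
  rw [hstab, ← IsGalois.intermediateFieldEquivSubgroup.isAtom_iff, ← isCoatom_dual_iff_isAtom]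
  rfl

variable {K : Type*} [Field K] {p : K[X]}

lemma gal_isPretransitive_rootSet_splittingField (hp : Irreducible p) :
    IsPretransitive p.Gal (p.rootSet p.SplittingField) where
  exists_smul_eq x y := by
    have hxy : minpoly K (y : p.SplittingField) = minpoly K (x : p.SplittingField) := by
      rw [← minpoly.eq_of_irreducible hp (mem_rootSet.mp x.2).2,
        ← minpoly.eq_of_irreducible hp (mem_rootSet.mp y.2).2]
    obtain ⟨σ, hσ⟩ := (Normal.minpoly_eq_iff_mem_orbit p.SplittingField).mp hxy
    exact ⟨σ, Subtype.ext hσ⟩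

theorem gal_isPreprimitive_iff_isAtom_adjoin (hp : Irreducible p) (hsep : p.Separable)
    (hdeg : 1 < p.natDegree) (x : p.rootSet p.SplittingField) :
    IsPreprimitive p.Gal (p.rootSet p.SplittingField) ↔ IsAtom K⟮(x : p.SplittingField)⟯ := by
  have := IsGalois.of_separable_splitting_field (F := K) (E := p.SplittingField) hsep
  have := gal_isPretransitive_rootSet_splittingField hp
  have : Nontrivial (p.rootSet p.SplittingField) := by
    rw [← Fintype.one_lt_card_iff_nontrivial,
      card_rootSet_eq_natDegree hsep (SplittingField.splits p)]
    exact hdeg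
  rw [← isCoatom_stabilizer_iff_preprimitive p.Gal x, ← isCoatom_stabilizer_iff_isAtom_adjoin]
  have hstab : stabilizer p.Gal x =
      stabilizer Gal(p.SplittingField/K) (x : p.SplittingField) := by
    ext σ
    exact Subtype.ext_iff
  rw [hstab]
  rfl

end Galois

section GenericFiber

variable {F : Type*} [Field F] {f : F[X]}

/-- The polynomial `f(x) - t` over the rational function field `F(t)`, where `t` is
`RatFunc.X`. -/
noncomputable def genericFiber (f : F[X]) : (RatFunc F)[X] :=
  f.map (algebraMap F (RatFunc F)) - C RatFunc.X

@[simp]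
lemma natDegree_genericFiber (f : F[X]) : (genericFiber f).natDegree = f.natDegree := by
  rw [genericFiber, natDegree_sub_C, natDegree_map]

lemma aeval_genericFiber {E : Type*} [CommRing E] [Algebra F E] [Algebra (RatFunc F) E]
    [IsScalarTower F (RatFunc F) E] (f : F[X]) (x : E) :
    aeval x (genericFiber f) = aeval x f - algebraMap (RatFunc F) E RatFunc.X := by
  simp [genericFiber, -RatFunc.algebraMap_eq_C]

-- Exchanging the two variables turns `f(x) - t` into a polynomial of degree one.
lemma irreducible_genericFiber (hf : 0 < f.natDegree) : Irreducible (genericFiber f) := by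
  let φ : F[X][X] := f.map (algebraMap F F[X]) - C X
  have hφ : φ.map (algebraMap F[X] (RatFunc F)) = genericFiber f := by
    simp only [φ, genericFiber, Polynomial.map_sub, Polynomial.map_map, map_C, RatFunc.algebraMap_X,
      ← IsScalarTower.algebraMap_eq]
  have hswap : φ = Bivariate.swap (C f - X) := by
    rw [map_sub, Bivariate.swap_C, Bivariate.swap_Y]
    rfl
  have hirr : Irreducible φ := by
    rw [hswap, MulEquiv.irreducible_iff]
    exact (show Associated (X - C f) (C f - X) from ⟨-1, by simp⟩).irreducible
      (irreducible_X_sub_C f)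
  have hdeg : φ.natDegree = f.natDegree := by
    rw [natDegree_sub_C, natDegree_map_eq_of_injective (algebraMap F F[X]).injective]
  rw [← hφ, ← IsPrimitive.irreducible_iff_irreducible_map_fraction_map]
  · exact hirr
  · exact hirr.isPrimitive (by lia)

lemma separable_genericFiber (hsep : f.Separable) : (genericFiber f).Separable := by
  rcases Nat.eq_zero_or_pos f.natDegree with hconst | hpos
  · obtain ⟨c, rfl⟩ := natDegree_eq_zero.mp hconst
    have hc : algebraMap F (RatFunc F) c ≠ RatFunc.X := fun hcX ↦
      RatFunc.transcendental_X (hcX ▸ isAlgebraic_algebraMap c)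
    rw [genericFiber, map_C, ← C_sub, separable_C]
    exact (sub_ne_zero.mpr hc).isUnit
  · have hder : derivative f ≠ 0 := fun h0 ↦ hpos.ne' <|
      natDegree_eq_zero_of_isUnit (isCoprime_zero_right.mp (h0 ▸ hsep))
    rw [separable_iff_derivative_ne_zero (irreducible_genericFiber hpos), genericFiber,
      derivative_sub, derivative_C, sub_zero, derivative_map]
    exact (Polynomial.map_ne_zero_iff (algebraMap F (RatFunc F)).injective).mpr hder

end GenericFiber

theorem indecomposable_iff_gal_primitive_general {F : Type*} [Field F] {f : F[X]}
    (hsep : (genericFiber f).Separable) :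
    CompIndecomposable f ↔
      IsPreprimitive (genericFiber f).Gal
        ((genericFiber f).rootSet (genericFiber f).SplittingField) := by
  have hcard := card_rootSet_eq_natDegree hsep (SplittingField.splits (genericFiber f))
  rw [natDegree_genericFiber] at hcard
  rcases le_or_gt f.natDegree 1 with hle | hlt
  · have := Fintype.card_le_one_iff_subsingleton.mp (hcard.trans_le hle)
    exact iff_of_true (.of_natDegree_le_one hle) .of_subsingleton
  have hpos : 0 < f.natDegree := zero_lt_one.trans hlt
  obtain ⟨x⟩ := Fintype.card_pos_iff.mp (hpos.trans_eq hcard.symm)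
  have hx : aeval (x : (genericFiber f).SplittingField) f = algebraMap (RatFunc F) _ RatFunc.X := by
    rw [← sub_eq_zero, ← aeval_genericFiber, aeval_eq_zero_of_mem_rootSet x.2]
  rw [gal_isPreprimitive_iff_isAtom_adjoin (irreducible_genericFiber hpos) hsep
      (by rwa [natDegree_genericFiber]) x,
    isAtom_adjoin_iff_isCoatom_adjoin_algebraMap hx,
    isCoatom_adjoin_algebraMap_iff_compIndecomposable hlt]

/-- A separable polynomial `f` over a field `F` is indecomposable (it cannot be written
as `g(h(x))` with `deg g, deg h > 1`) if and only if the Galois group of `f(x) - t` over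
`F(t)` acts primitively (transitively with only trivial blocks) on the roots of
`f(x) - t`. -/
theorem indecomposable_iff_gal_primitive
    (F : Type*) [Field F] (f : Polynomial F) (hsep : f.Separable) :
    ∀ ft : Polynomial (RatFunc F),
      ft = f.map (algebraMap F (RatFunc F)) - Polynomial.C RatFunc.X →
    ((¬ ∃ g h : Polynomial F, 1 < g.natDegree ∧ 1 < h.natDegree ∧ f = g.comp h) ↔
      (MulAction.IsPretransitive ft.Gal (ft.rootSet ft.SplittingField) ∧
        ∀ B : Set (ft.rootSet ft.SplittingField),
          MulAction.IsBlock ft.Gal B → MulAction.IsTrivialBlock B)) := by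
  rintro _ rfl
  exact (indecomposable_iff_gal_primitive_general (separable_genericFiber hsep)).trans
    ⟨fun h ↦ ⟨h.toIsPretransitive, fun _ ↦ h.isTrivialBlock_of_isBlock⟩,
      fun ⟨htrans, hblock⟩ ↦ { htrans with isTrivialBlock_of_isBlock := hblock _ }⟩
end

section
/- Let k be an algebraically closed field of characteristic 2 and f(x) = a₂x² + a₁x + a₀ ∈ k[x] with a₂a₁ ≠ 0. Then for every n ≥ 1, the Galois group of fⁿ(x) − t over k(t) is isomorphic to (C₂)ⁿ, the direct product of n copies of the cyclic group of order 2. -/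
open Polynomial

/-!
Write `f = ℒ + c` with `ℒ` additive and separable. Since `f x - f y = ℒ (x - y)` and `k` is
separably closed, `x - y` is a constant as soon as `f x - f y` is one; peeling off the `n` layers
of `fⁿ`, any two roots of `fⁿ - t` differ by a constant. Hence one root `α` generates the splitting
field and, as automorphisms fix the constants, `σ ↦ σ α - α` embeds the Galois group in an additive
group of characteristic `p`. Finally `fⁿ - t` is irreducible, being linear in `t`, so the order of
the Galois group is the degree `(deg f)ⁿ`.
-/

section Translation

variable {K A : Type*} [CommRing K] [Ring A] [Algebra K A]

/-- The homomorphism `σ ↦ σ α - α` from the automorphism group to the additive group of `A`, for an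
element `α` that every automorphism moves by a scalar. -/
def translationHom (α : A) (hα : ∀ σ : A ≃ₐ[K] A, σ α - α ∈ (algebraMap K A).range) :
    (A ≃ₐ[K] A) →* Multiplicative A where
  toFun σ := .ofAdd (σ α - α)
  map_one' := by simp
  map_mul' σ τ := by
    obtain ⟨c, hc⟩ := hα τ
    have hfix : σ (τ α - α) = τ α - α := by rw [← hc, AlgEquiv.commutes]
    have hadd : σ (τ α) - α = (σ α - α) + (τ α - α) := by
      rw [← hfix, map_sub]
      abel
    exact congrArg Multiplicative.ofAdd hadd

theorem translationHom_injective {α : A}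
    (hα : ∀ σ : A ≃ₐ[K] A, σ α - α ∈ (algebraMap K A).range) (htop : Algebra.adjoin K {α} = ⊤) :
    Function.Injective (translationHom α hα) := by
  intro σ τ hστ
  have heq : σ α = τ α := sub_left_injective (Multiplicative.ofAdd.injective hστ)
  have hhom : (σ : A →ₐ[K] A) = τ := AlgHom.ext_of_adjoin_eq_top htop (by simpa using heq)
  exact AlgEquiv.coe_toAlgHom_injective hhom

theorem adjoin_singleton_eq_top_of_sub_mem_range {s : Set A} (hs : Algebra.adjoin K s = ⊤) {α : A}
    (hα : ∀ x ∈ s, x - α ∈ (algebraMap K A).range) : Algebra.adjoin K {α} = ⊤ := by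
  rw [eq_top_iff, ← hs, Algebra.adjoin_le_iff]
  intro x hx
  obtain ⟨c, hc⟩ := hα x hx
  rw [← sub_add_cancel x α, ← hc]
  exact add_mem (Subalgebra.algebraMap_mem _ c) (Algebra.self_mem_adjoin_singleton K α)

end Translation

theorem nonempty_linearEquiv_of_natCard_eq_pow {F V : Type*} [DivisionRing F] [Finite F]
    [AddCommGroup V] [Module F V] {m : ℕ} (hcard : Nat.card V = Nat.card F ^ m) :
    Nonempty (V ≃ₗ[F] (Fin m → F)) := by
  have : Finite V :=
    Nat.finite_of_card_ne_zero (by rw [hcard]; exact pow_ne_zero m Nat.card_pos.ne')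
  have hrank : Module.finrank F V = m :=
    Nat.pow_right_injective Finite.one_lt_card (Module.natCard_eq_pow_finrank.symm.trans hcard)
  exact FiniteDimensional.nonempty_linearEquiv_of_finrank_eq (by simp [hrank])

theorem nonempty_mulEquiv_of_pow_eq_one_of_card {G : Type*} [CommGroup G] (p : ℕ)
    [Fact p.Prime] {m : ℕ} (hpow : ∀ g : G, g ^ p = 1) (hcard : Nat.card G = p ^ m) :
    Nonempty (G ≃* (Fin m → Multiplicative (ZMod p))) := by
  let : Module (ZMod p) (Additive G) := AddCommGroup.zmodModule (G := Additive G) hpow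
  have hcard' : Nat.card (Additive G) = Nat.card (ZMod p) ^ m := by rwa [Nat.card_zmod]
  obtain ⟨e⟩ := nonempty_linearEquiv_of_natCard_eq_pow hcard'
  exact ⟨(AddEquiv.toMultiplicativeRight e.toAddEquiv).trans (MulEquiv.funMultiplicative _ _)⟩

theorem card_gal_eq_natDegree_of_adjoin_singleton_eq_top {K : Type*} [Field K] {P : K[X]}
    (hirr : Irreducible P) (hsep : P.Separable) {α : P.SplittingField}
    (hα : aeval α P = 0) (htop : Algebra.adjoin K {α} = ⊤) : Nat.card P.Gal = P.natDegree := by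
  have hprim : IntermediateField.adjoin K {α} = ⊤ :=
    IntermediateField.adjoin_eq_top_of_algebra _ _ htop
  rw [Gal.card_of_separable hsep,
    ← (Field.primitive_element_iff_minpoly_natDegree_eq K α).1 hprim,
    ← minpoly.eq_of_irreducible hirr hα,
    natDegree_mul_C (inv_ne_zero (leadingCoeff_ne_zero.2 hirr.ne_zero))]

theorem nonempty_gal_mulEquiv_of_root_sub_mem_range {K : Type*} [Field K] (p : ℕ)
    [Fact p.Prime] [CharP K p] {P : K[X]} (hirr : Irreducible P) (hsep : P.Separable) {m : ℕ}
    (hdeg : P.natDegree = p ^ m)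
    (hroots : ∀ x y : P.SplittingField, aeval x P = 0 → aeval y P = 0 →
      y - x ∈ (algebraMap K P.SplittingField).range) :
    Nonempty (P.Gal ≃* (Fin m → Multiplicative (ZMod p))) := by
  have : CharP P.SplittingField p := charP_of_injective_algebraMap' K p
  obtain ⟨α, hα⟩ : ∃ α : P.SplittingField, aeval α P = 0 := by
    simpa [eval_map_algebraMap] using (SplittingField.splits P).exists_eval_eq_zero
      (by rw [degree_map]; exact (degree_pos_of_irreducible hirr).ne')
  have htop : Algebra.adjoin K {α} = ⊤ :=
    adjoin_singleton_eq_top_of_sub_mem_range (SplittingField.adjoin_rootSet P)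
      fun x hx => hroots α x hα (aeval_eq_zero_of_mem_rootSet hx)
  have hconj : ∀ σ : P.SplittingField ≃ₐ[K] P.SplittingField,
      σ α - α ∈ (algebraMap K P.SplittingField).range := fun σ =>
    hroots α (σ α) hα (by rw [aeval_algHom_apply, hα, map_zero])
  let e : P.Gal ≃* (translationHom α hconj).range :=
    MonoidHom.ofInjective (translationHom_injective hconj htop)
  have hpow : ∀ g : (translationHom α hconj).range, g ^ p = 1 := fun g =>
    Subtype.ext (show p • g.1.toAdd = 0 by simp)
  have hcard : Nat.card (translationHom α hconj).range = p ^ m := by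
    rw [← Nat.card_congr e.toEquiv,
      card_gal_eq_natDegree_of_adjoin_singleton_eq_top hirr hsep hα htop, hdeg]
  exact (nonempty_mulEquiv_of_pow_eq_one_of_card p hpow hcard).map e.trans

theorem separable_of_isUnit_derivative {R : Type*} [CommSemiring R] {f : R[X]}
    (hf : IsUnit (derivative f)) : f.Separable := by
  obtain ⟨b, hb⟩ := hf.exists_left_inv
  exact ⟨0, b, by rw [zero_mul, zero_add, hb]⟩

theorem derivative_iterate_comp_of_eq_C {R : Type*} [CommSemiring R] {f : R[X]} {b : R}
    (hf : derivative f = C b) (n : ℕ) : derivative (f.comp^[n] X) = C (b ^ n) := by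
  induction n with
  | zero => simp
  | succ n ih =>
    rw [Function.iterate_succ_apply', derivative_comp, hf, ih, C_comp, ← C_mul, pow_succ]

theorem irreducible_map_sub_C_ratFuncX {R : Type*} [CommRing R] [IsDomain R]
    [UniqueFactorizationMonoid R] {F : R[X]} (hF : F.natDegree ≠ 0) :
    Irreducible (F.map (algebraMap R (RatFunc R)) - C RatFunc.X) := by
  have hswap : F.map C - C X = Bivariate.swap (C F - X) := by
    rw [map_sub, Bivariate.swap_C, Bivariate.swap_Y]
  have hirr : Irreducible (F.map C - C X : R[X][X]) := by
    rw [hswap, MulEquiv.irreducible_iff, ← neg_sub]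
    exact (Associated.refl (X - C F)).neg_left.irreducible_iff.2 (irreducible_X_sub_C F)
  have hdeg : (F.map C - C X : R[X][X]).natDegree ≠ 0 := by
    rwa [natDegree_sub_C, natDegree_map_eq_of_injective C_injective]
  have hmap : (F.map C - C X : R[X][X]).map (algebraMap R[X] (RatFunc R)) =
      F.map (algebraMap R (RatFunc R)) - C RatFunc.X := by
    rw [Polynomial.map_sub, Polynomial.map_map, map_C, RatFunc.algebraMap_X,
      IsScalarTower.algebraMap_eq R R[X] (RatFunc R), algebraMap_eq]
  rw [← hmap]
  exact (hirr.isPrimitive hdeg).irreducible_iff_irreducible_map_fraction_map.1 hirr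

section LinearizedPolynomial

variable {R : Type*} {d : ℕ}

/-- The linearized polynomial `a₀ X + a₁ X ^ p + ⋯ + a_d X ^ (p ^ d)`; it is additive in
characteristic `p`. -/
noncomputable def linearizedPolynomial [Semiring R] (p : ℕ) (a : Fin (d + 1) → R) : R[X] :=
  ∑ i, C (a i) * X ^ p ^ (i : ℕ)

variable (p : ℕ) (a : Fin (d + 1) → R)

theorem derivative_linearizedPolynomial [Semiring R] [CharP R p] :
    derivative (linearizedPolynomial p a) = C (a 0) := by
  simp [linearizedPolynomial, Fin.sum_univ_succ, derivative_X_pow]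

theorem natDegree_linearizedPolynomial [Semiring R] (hp : 1 < p) (ha : a (Fin.last d) ≠ 0) :
    (linearizedPolynomial p a).natDegree = p ^ d := by
  rw [linearizedPolynomial, Fin.sum_univ_castSucc, natDegree_add_eq_right_of_degree_lt]
  · simp [ha]
  · rw [degree_C_mul_X_pow _ ha, Fin.val_last]
    refine (degree_sum_le _ _).trans_lt ((Finset.sup_lt_iff (WithBot.bot_lt_coe _)).2 fun i _ => ?_)
    exact (degree_C_mul_X_pow_le _ _).trans_lt (by exact_mod_cast Nat.pow_lt_pow_right hp i.2)

theorem aeval_sub_linearizedPolynomial [CommSemiring R] [Fact p.Prime] {A : Type*} [CommRing A]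
    [CharP A p] [Algebra R A] (x y : A) : aeval (x - y) (linearizedPolynomial p a) =
      aeval x (linearizedPolynomial p a) - aeval y (linearizedPolynomial p a) := by
  simp [linearizedPolynomial, sub_pow_char_pow, mul_sub]

end LinearizedPolynomial

theorem sub_mem_of_iterate_sub_mem {A : Type*} [AddGroup A] (S : AddSubgroup A) {g : A → A}
    (hg : ∀ x y, g x - g y ∈ S → x - y ∈ S) (n : ℕ) {x y : A} (h : g^[n] x - g^[n] y ∈ S) :
    x - y ∈ S := by
  induction n with
  | zero => exact h
  | succ n ih =>
    rw [Function.iterate_succ_apply', Function.iterate_succ_apply'] at h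
    exact ih (hg _ _ h)

section SepClosed

variable {k E : Type*} [Field k] [IsSepClosed k] [Field E] [Algebra k E]

theorem mem_range_algebraMap_of_aeval_eq_zero_of_separable {F : k[X]} (hF : F.Separable) {x : E}
    (hx : aeval x F = 0) : x ∈ (algebraMap k E).range :=
  (IsSepClosed.splits_of_separable F hF).mem_range_of_isRoot hF.ne_zero
    (by rwa [IsRoot, eval_map_algebraMap])

variable {p : ℕ} [CharP k p] {d : ℕ} {a : Fin (d + 1) → k}

theorem mem_range_algebraMap_of_aeval_linearizedPolynomial_mem (ha : a 0 ≠ 0) {x : E}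
    (hx : aeval x (linearizedPolynomial p a) ∈ (algebraMap k E).range) :
    x ∈ (algebraMap k E).range := by
  obtain ⟨e, he⟩ := hx
  have hsep : (linearizedPolynomial p a - C e).Separable :=
    separable_of_isUnit_derivative (by simp [derivative_linearizedPolynomial, ha])
  exact mem_range_algebraMap_of_aeval_eq_zero_of_separable hsep (by simp [he])

theorem sub_mem_range_of_aeval_iterate_comp_eq [Fact p.Prime] (ha : a 0 ≠ 0) {c : k} {f : k[X]}
    (hf : f = linearizedPolynomial p a + C c) (n : ℕ) {x y : E}
    (hxy : aeval x (f.comp^[n] X) = aeval y (f.comp^[n] X)) : x - y ∈ (algebraMap k E).range := by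
  have : CharP E p := charP_of_injective_algebraMap' k p
  have hstep (u v : E) (h : aeval u f - aeval v f ∈ (algebraMap k E).range) :
      u - v ∈ (algebraMap k E).range := by
    apply mem_range_algebraMap_of_aeval_linearizedPolynomial_mem ha
    rw [aeval_sub_linearizedPolynomial]
    simpa [hf] using h
  have hiter (z : E) : (fun u => aeval u f)^[n] z = aeval z (f.comp^[n] X) := by simp [aeval_def]
  apply sub_mem_of_iterate_sub_mem (algebraMap k E).range.toAddSubgroup hstep n
  rw [hiter, hiter, hxy, sub_self]
  exact zero_mem _

end SepClosed

theorem gal_iterate_quadratic_char_two_general {k : Type*} [Field k] [IsSepClosed k] (p : ℕ)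
    [Fact p.Prime] [CharP k p] {d : ℕ} (a : Fin (d + 1) → k) (ha₀ : a 0 ≠ 0)
    (had : a (Fin.last d) ≠ 0) (c : k) (f : k[X]) (hf : f = linearizedPolynomial p a + C c)
    (n : ℕ) (P : (RatFunc k)[X])
    (hP : P = (f.comp^[n] X).map (algebraMap k (RatFunc k)) - C RatFunc.X) :
    Nonempty (P.Gal ≃* (Fin (d * n) → Multiplicative (ZMod p))) := by
  have hp : 1 < p := (Fact.out : p.Prime).one_lt
  have : CharP (RatFunc k) p := charP_of_injective_algebraMap' k p
  have hdeg : (f.comp^[n] X).natDegree = p ^ (d * n) := by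
    rw [natDegree_iterate_comp, hf, natDegree_add_C, natDegree_linearizedPolynomial p a hp had,
      natDegree_X, mul_one, pow_mul]
  have hder : derivative (f.comp^[n] X) = C (a 0 ^ n) :=
    derivative_iterate_comp_of_eq_C (by simp [hf, derivative_linearizedPolynomial]) n
  have hirr : Irreducible P := hP ▸ irreducible_map_sub_C_ratFuncX (by rw [hdeg]; positivity)
  have hsep : P.Separable := by
    apply separable_of_isUnit_derivative
    rw [hP, derivative_sub, derivative_map, hder, derivative_C, sub_zero, map_C, isUnit_C]
    simp [ha₀]
  have hroot (z : P.SplittingField) (hz : aeval z P = 0) :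
      aeval z (f.comp^[n] X) = algebraMap (RatFunc k) P.SplittingField RatFunc.X := by
    have hz' := congrArg (aeval z) hP
    rwa [hz, map_sub, aeval_map_algebraMap, aeval_C, eq_comm, sub_eq_zero] at hz'
  refine nonempty_gal_mulEquiv_of_root_sub_mem_range p hirr hsep ?_ fun x y hx hy => ?_
  · rw [hP, natDegree_sub_C, natDegree_map, hdeg]
  · obtain ⟨e, he⟩ := sub_mem_range_of_aeval_iterate_comp_eq ha₀ hf n
      ((hroot y hy).trans (hroot x hx).symm)
    exact ⟨algebraMap k (RatFunc k) e, by rw [← he, ← IsScalarTower.algebraMap_apply]⟩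

/-- Let `k` be an algebraically closed field of characteristic `2` and
`f(x) = a₂x² + a₁x + a₀ ∈ k[x]` with `a₂a₁ ≠ 0`.  Then for every `n ≥ 1` the Galois
group of `fⁿ(x) − t` over `k(t)` is isomorphic to `(C₂)ⁿ`. -/
theorem gal_iterate_quadratic_char_two
    (k : Type*) [Field k] [IsAlgClosed k] [CharP k 2]
    (a₂ a₁ a₀ : k) (h : a₂ * a₁ ≠ 0)
    (f : Polynomial k) (hf : f = C a₂ * X ^ 2 + C a₁ * X + C a₀) :
    ∀ n : ℕ, 1 ≤ n →
      ∀ P : Polynomial (RatFunc k),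
        P = ((fun q : Polynomial k => f.comp q)^[n] X).map (algebraMap k (RatFunc k))
              - C RatFunc.X →
        Nonempty (P.Gal ≃* (Fin n → Multiplicative (ZMod 2))) := by
  intro n _ P hP
  exact one_mul n ▸ gal_iterate_quadratic_char_two_general 2 ![a₁, a₂] (right_ne_zero_of_mul h)
    (left_ne_zero_of_mul h) a₀ f (by simp [hf, linearizedPolynomial, add_comm]) n P hP
end

section
/- Let A be an integrally closed domain with fraction field K, K' a field, ψ: A → K' a ring homomorphism, and f(x) = a_d x^d + ... + a₀ ∈ A[x] with d ≥ 1 and a_d ∉ ker(ψ). If the coefficient-wise image ψ̃(f) of f is separable over K', then f is separable over K and Gal(ψ̃(f)/K') is isomorphic to a subgroup of Gal(f/K). -/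
open Polynomial

/-!
Localizing `A` at the complement of `ker ψ` makes the leading coefficient of `f` a unit, so the
roots of `f` in a splitting field `L` of `f` over `K` lie in the integral closure `B` of `A` in `L`.
Integrality allows `ψ` to be extended to a ring homomorphism `φ` from `B` to an algebraic closure
`Ω` of `K'`; as `ψ̃(f)` has distinct roots, so has `f`, and `φ` is a bijection between the two sets
of roots. For every `T ∈ Gal(Ω/K')` the homomorphism `T ∘ φ` also extends `ψ`, hence equals `φ ∘ σ`
for some `σ ∈ Gal(L/K)`. Thus, through the bijection `φ`, every permutation of the roots induced by
`Gal(ψ̃(f)/K')` is induced by `Gal(f/K)`.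
-/

theorem nonempty_algHom_of_ker_algebraMap_le (A B Ω : Type*) [CommRing A] [CommRing B]
    [Algebra A B] [Algebra.IsIntegral A B] [Field Ω] [IsAlgClosed Ω] [Algebra A Ω]
    (h : RingHom.ker (algebraMap A B) ≤ RingHom.ker (algebraMap A Ω)) :
    Nonempty (B →ₐ[A] Ω) := by
  let P := RingHom.ker (algebraMap A Ω)
  have : P.IsPrime := RingHom.ker_isPrime _
  obtain ⟨Q, -, hQ, hQP⟩ := Ideal.exists_ideal_over_prime_of_isIntegral (S := B) P ⊥ h
  have : Q.LiesOver P := ⟨hQP.symm⟩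
  let : Algebra (A ⧸ P) Ω := (RingHom.kerLift (algebraMap A Ω)).toAlgebra
  have : IsScalarTower A (A ⧸ P) Ω := .of_algebraMap_eq fun _ ↦ rfl
  have : FaithfulSMul (A ⧸ P) Ω :=
    (faithfulSMul_iff_algebraMap_injective _ _).2 (RingHom.kerLift_injective _)
  have : Module.IsTorsionFree (A ⧸ P) (B ⧸ Q) :=
    Module.isTorsionFree_iff_faithfulSMul.2 inferInstance
  have : Algebra.IsAlgebraic (A ⧸ P) (B ⧸ Q) := Algebra.IsIntegral.isAlgebraic
  let l : (B ⧸ Q) →ₐ[A ⧸ P] Ω := IsAlgClosed.lift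
  exact ⟨(l.restrictScalars A).comp (Ideal.Quotient.mkₐ A Q)⟩

section Conjugation

variable {A B Ω : Type*} (G : Type*) [CommRing A] [CommRing B] [Algebra A B] [Group G]
  [MulSemiringAction G B] [Algebra.IsInvariant A B G] [CommRing Ω] [Algebra A Ω]
  (φ₁ φ₂ : B →ₐ[A] Ω)

theorem map_algHom_eq_of_smul_eq {q : B[X]} (hq : ∀ n, ∀ g : G, g • q.coeff n = q.coeff n) :
    q.map (φ₁ : B →+* Ω) = q.map (φ₂ : B →+* Ω) := by
  ext n
  obtain ⟨a, ha⟩ := Algebra.IsInvariant.isInvariant (A := A) (q.coeff n) (hq n)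
  simp only [coeff_map, ← ha, RingHom.coe_coe, AlgHom.commutes]

variable [Finite G] [IsDomain Ω]

theorem exists_map_algHom_eq_map_smul (θ : B[X]) :
    ∃ g : G, θ.map (φ₂ : B →+* Ω) = (g • θ).map (φ₁ : B →+* Ω) := by
  cases nonempty_fintype G
  -- The product of `X - g • θ` over `G` has the root `θ` and is invariant, so `φ₁` and `φ₂` agree
  -- on it: the image of `θ` under `φ₂` is a root of the product of the `X - φ₁ (g • θ)`.
  let P : B[X][X] := MulSemiringAction.charpoly G θ
  have hP : P.map (mapRingHom (φ₁ : B →+* Ω)) = P.map (mapRingHom (φ₂ : B →+* Ω)) := by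
    ext1 m
    simp only [coeff_map, coe_mapRingHom]
    refine map_algHom_eq_of_smul_eq G φ₁ φ₂ fun n g ↦ ?_
    rw [← coeff_smul, MulSemiringAction.smul_coeff_charpoly]
  have hroot : (P.map (mapRingHom (φ₁ : B →+* Ω))).eval (θ.map (φ₂ : B →+* Ω)) = 0 := by
    rw [hP, ← coe_mapRingHom, eval_map_apply, MulSemiringAction.eval_charpoly, map_zero]
  simpa [P, MulSemiringAction.charpoly_eq, Polynomial.map_prod, eval_prod,
    Finset.prod_eq_zero_iff, sub_eq_zero] using hroot

theorem exists_algHom_eq_algHom_smul : ∃ g : G, ∀ b, φ₂ b = φ₁ (g • b) := by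
  classical
  by_contra! h
  choose b hb using h
  -- A polynomial collects the counterexamples `b g`, so that a single `g` serves all of them.
  obtain ⟨n, ⟨e⟩⟩ := Finite.exists_equiv_fin G
  obtain ⟨g, hg⟩ := exists_map_algHom_eq_map_smul G φ₁ φ₂ (ofFn n (b ∘ e.symm))
  have hcoeff : (ofFn n (b ∘ e.symm)).coeff (e g) = b g := by
    simp [ofFn_coeff_eq_val_of_lt]
  have := congrArg (coeff · (e g)) hg
  simp only [coeff_map, coeff_smul, hcoeff, RingHom.coe_coe] at this
  exact hb g this

end Conjugation

theorem splits_map_algebraMap_of_isIntegralClosure {A : Type*} (B : Type*) {L : Type*} [CommRing A]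
    [CommRing B] [CommRing L] [IsDomain L] [Algebra A B] [Algebra A L] [Algebra B L]
    [IsScalarTower A B L] [IsIntegralClosure B A L] {f : A[X]} (hu : IsUnit f.leadingCoeff)
    (hf : (f.map (algebraMap A L)).Splits) : (f.map (algebraMap A B)).Splits := by
  rw [IsScalarTower.algebraMap_eq A B L, ← map_map] at hf
  refine hf.of_splits_map_of_injective (IsIntegralClosure.algebraMap_injective B A L)
    fun x hx ↦ ?_
  rw [map_map, ← IsScalarTower.algebraMap_eq, ← aroots_def, mem_aroots'] at hx
  refine (IsIntegralClosure.isIntegral_iff (A := B) (R := A)).1 ?_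
  simpa [smul_smul] using (isIntegral_leadingCoeff_smul f x hx.2).smul (hu.unit⁻¹ : Aˣ).val

section ScalarTower

variable {A B C : Type*} [CommRing A] [CommRing B] [CommRing C] [Algebra A B] [Algebra A C]
  (k : Type*) [CommRing k] [Algebra A k] [Algebra k C] [IsScalarTower A k C] {f : A[X]}

theorem separable_map_of_isScalarTower (hsep : (f.map (algebraMap A k)).Separable) :
    (f.map (algebraMap A C)).Separable := by
  simpa only [map_map, ← IsScalarTower.algebraMap_eq] using hsep.map (f := algebraMap k C)

theorem splits_map_map_of_algHom (φ : B →ₐ[A] C) (hB : (f.map (algebraMap A B)).Splits) :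
    ((f.map (algebraMap A k)).map (algebraMap k C)).Splits := by
  simpa only [map_map, φ.comp_algebraMap, ← IsScalarTower.algebraMap_eq]
    using hB.map (φ : B →+* C)

end ScalarTower

section Roots

variable {A B C : Type*} [CommRing A] [CommRing B] [IsDomain B] [CommRing C] [IsDomain C]
  [Algebra A B] [Algebra A C] {f : A[X]}

theorem nodup_map_aroots_of_separable (φ : B →ₐ[A] C) (hB : (f.map (algebraMap A B)).Splits)
    (hsep : (f.map (algebraMap A C)).Separable) : ((f.aroots B).map φ).Nodup := by
  have hmap : (f.map (algebraMap A B)).map (φ : B →+* C) = f.map (algebraMap A C) := by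
    rw [map_map, φ.comp_algebraMap]
  have hroots : f.aroots C = (f.aroots B).map φ := by
    rw [aroots_def, aroots_def, ← hmap, hB.roots_map_of_ne_zero (hmap ▸ hsep.ne_zero)]
    rfl
  exact hroots ▸ nodup_roots hsep

theorem separable_map_of_separable_map_of_splits (L : Type*) [Field L] [Algebra A L] [Algebra B L]
    [IsScalarTower A B L] [FaithfulSMul B L] (φ : B →ₐ[A] C)
    (hB : (f.map (algebraMap A B)).Splits) (hsep : (f.map (algebraMap A C)).Separable) :
    (f.map (algebraMap A L)).Separable := by
  have hinj := FaithfulSMul.algebraMap_injective B L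
  have hB₀ : f.map (algebraMap A B) ≠ 0 := fun h ↦ hsep.ne_zero <| by
    rw [← φ.comp_algebraMap, ← map_map, h, Polynomial.map_zero]
  rw [IsScalarTower.algebraMap_eq A B L, ← map_map, ← nodup_roots_iff_of_splits
    ((Polynomial.map_ne_zero_iff hinj).2 hB₀) (hB.map _), hB.roots_map_of_injective hinj]
  exact (nodup_map_aroots_of_separable φ hB hsep).of_map.map hinj

theorem bijOn_rootSet_of_separable (k : Type*) [CommRing k] [Algebra A k] [Algebra k C]
    [IsScalarTower A k C] (φ : B →ₐ[A] C) (hB : (f.map (algebraMap A B)).Splits)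
    (hsep : (f.map (algebraMap A k)).Separable) :
    Set.BijOn φ (f.rootSet B) ((f.map (algebraMap A k)).rootSet C) := by
  classical
  have hC : (f.map (algebraMap A C)).Separable := separable_map_of_isScalarTower k hsep
  have himage : φ '' f.rootSet B = (f.map (algebraMap A k)).rootSet C := by
    rw [hB.image_rootSet_of_map_ne_zero φ hC.ne_zero, rootSet, rootSet, aroots_map]
  suffices Set.InjOn φ (f.rootSet B) from himage ▸ this.bijOn_image
  intro x hx y hy
  simp only [rootSet_def, Finset.mem_coe, Multiset.mem_toFinset] at hx hy
  exact Multiset.inj_on_of_nodup_map (nodup_map_aroots_of_separable φ hB hC) x hx y hy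

end Roots

theorem exists_injective_monoidHom_of_equiv {G H S T : Type*} [Group G] [Group H]
    {ρ : G →* Equiv.Perm S} (hρ : Function.Injective ρ) {σ : H →* Equiv.Perm T}
    (hσ : Function.Injective σ) (r : S ≃ T) (hr : ∀ h, ∃ g, ∀ s, r (ρ g s) = σ h (r s)) :
    ∃ e : H →* G, Function.Injective e := by
  choose e he using hr
  refine ⟨.mk' e fun h₁ h₂ ↦ hρ ?_, fun h₁ h₂ h ↦ hσ ?_⟩
  · ext s
    apply r.injective
    simp only [map_mul, Equiv.Perm.mul_apply, he]
  · ext t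
    obtain ⟨s, rfl⟩ := r.surjective t
    rw [← he, ← he, show e h₁ = e h₂ from h]

theorem exists_injective_gal_monoidHom_of_isInvariant {A B K' Ω : Type*} (K L : Type*) [CommRing A]
    [CommRing B] [IsDomain B] [Algebra A B] [Field K] [Algebra A K] [Field L] [Algebra K L]
    [Algebra A L] [IsScalarTower A K L] [Algebra B L] [IsScalarTower A B L]
    [Finite Gal(L/K)] [MulSemiringAction Gal(L/K) B] [SMulCommClass Gal(L/K) A B]
    [SMulDistribClass Gal(L/K) B L] [Algebra.IsInvariant A B Gal(L/K)]
    [Field K'] [Algebra A K'] [Field Ω] [Algebra K' Ω] [Algebra A Ω] [IsScalarTower A K' Ω]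
    [Normal K' Ω] (φ : B →ₐ[A] Ω) {f : A[X]} (hf : (f.map (algebraMap A B)).Splits)
    (hK : (f.map (algebraMap A K)).Separable) (hK' : (f.map (algebraMap A K')).Separable) :
    ∃ e : (f.map (algebraMap A K')).Gal →* (f.map (algebraMap A K)).Gal,
      Function.Injective e := by
  let ι := IsScalarTower.toAlgHom A B L
  have : Fact ((f.map (algebraMap A K)).map (algebraMap K L)).Splits :=
    ⟨splits_map_map_of_algHom K ι hf⟩
  have : Fact ((f.map (algebraMap A K')).map (algebraMap K' Ω)).Splits :=
    ⟨splits_map_map_of_algHom K' φ hf⟩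
  have hL := bijOn_rootSet_of_separable K ι hf hK
  have hΩ := bijOn_rootSet_of_separable K' φ hf hK'
  refine exists_injective_monoidHom_of_equiv (Gal.galActionHom_injective _ L)
    (Gal.galActionHom_injective _ Ω) ((hL.equiv _).symm.trans (hΩ.equiv _)) fun τ ↦ ?_
  obtain ⟨T, rfl⟩ := Gal.restrict_surjective _ Ω τ
  obtain ⟨σ, hσ⟩ := exists_algHom_eq_algHom_smul Gal(L/K) φ ((T.toAlgHom.restrictScalars A).comp φ)
  refine ⟨Gal.restrict _ L σ, fun x ↦ ?_⟩
  obtain ⟨b, rfl⟩ := (hL.equiv _).surjective x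
  have hσb : Gal.galActionHom _ L (Gal.restrict _ L σ) (hL.equiv _ b) = hL.equiv _ (σ • b) := by
    ext
    rw [Gal.galActionHom_restrict]
    exact (algebraMap.smul' σ (b : B) L).symm
  rw [hσb]
  ext
  simp only [Equiv.trans_apply, Equiv.symm_apply_apply, Gal.galActionHom_restrict]
  exact (hσ b).symm

theorem separable_and_exists_injective_gal_of_isUnit_leadingCoeff {A : Type*} (K K' : Type*)
    [CommRing A] [IsDomain A] [IsIntegrallyClosed A] [Field K] [Algebra A K] [IsFractionRing A K]
    [Field K'] [Algebra A K'] {f : A[X]} (hu : IsUnit f.leadingCoeff)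
    (hsep : (f.map (algebraMap A K')).Separable) :
    (f.map (algebraMap A K)).Separable ∧
      ∃ e : (f.map (algebraMap A K')).Gal →* (f.map (algebraMap A K)).Gal,
        Function.Injective e := by
  let L := (f.map (algebraMap A K)).SplittingField
  let B := integralClosure A L
  have hA : Function.Injective (algebraMap A B) :=
    algebraMap_injective_of_field_isFractionRing A B K L
  obtain ⟨φ⟩ := nonempty_algHom_of_ker_algebraMap_le A B (AlgebraicClosure K')
    (((RingHom.injective_iff_ker_eq_bot _).1 hA).trans_le bot_le)
  have hB : (f.map (algebraMap A B)).Splits :=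
    splits_map_algebraMap_of_isIntegralClosure B hu <| by
      rw [IsScalarTower.algebraMap_eq A K L, ← map_map]
      exact SplittingField.splits _
  have hK : (f.map (algebraMap A K)).Separable := by
    have := separable_map_of_separable_map_of_splits L φ hB <|
      separable_map_of_isScalarTower K' hsep
    rwa [IsScalarTower.algebraMap_eq A K L, ← map_map, separable_map] at this
  have : FiniteDimensional K L := IsSplittingField.finiteDimensional L (f.map (algebraMap A K))
  have : IsGalois K L := .of_separable_splitting_field hK
  have : IsFractionRing B L := integralClosure.isFractionRing_of_finite_extension K L
  have : IsGaloisGroup Gal(L/K) A B := .of_isFractionRing _ A B K L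
  have := IsGaloisGroup.isInvariant (G := Gal(L/K)) (A := A) (B := B)
  exact ⟨hK, exists_injective_gal_monoidHom_of_isInvariant K L φ hB hK hsep⟩

theorem exists_isIntegrallyClosed_subalgebra_lift {A K' : Type*} (K : Type*) [CommRing A]
    [IsDomain A] [IsIntegrallyClosed A] [Field K] [Algebra A K] [IsFractionRing A K] [Field K']
    (ψ : A →+* K') : ∃ (S : Subalgebra A K) (ψ' : S →+* K'), IsIntegrallyClosed S ∧
      ψ'.comp (algebraMap A S) = ψ ∧ ∀ a, ψ a ≠ 0 → IsUnit (algebraMap A S a) := by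
  let M := (nonZeroDivisors K').comap ψ
  have hM : M ≤ nonZeroDivisors A :=
    le_nonZeroDivisors_of_noZeroDivisors fun h ↦ nonZeroDivisors.ne_zero h (map_zero ψ)
  let S := Localization.subalgebra.ofField K M hM
  let ψ' : S →+* K' := IsLocalization.lift (M := M) (g := ψ) fun y ↦
    isUnit_iff_ne_zero.2 (nonZeroDivisors.ne_zero y.2)
  exact ⟨S, ψ', isIntegrallyClosed_of_isLocalization S M hM, IsLocalization.lift_comp _,
    fun a ha ↦ IsLocalization.map_units S (⟨a, mem_nonZeroDivisors_of_ne_zero ha⟩ : M)⟩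

/-- **Specialization lemma (Odoni).**  Let `A` be an integrally closed domain with
fraction field `K`, `K'` a field and `ψ : A → K'` a ring homomorphism.  Let
`f = a_d x^d + ⋯ + a₀ ∈ A[x]` with `d ≥ 1` and `a_d ∉ ker ψ`.  If the coefficient-wise
image `ψ̃(f)` is separable over `K'`, then `f` is separable over `K` and
`Gal(ψ̃(f)/K')` is isomorphic to a subgroup of `Gal(f/K)`. -/
theorem gal_of_specialization_embeds
    (A : Type*) [CommRing A] [IsDomain A] [IsIntegrallyClosed A]
    (K : Type*) [Field K] [Algebra A K] [IsFractionRing A K]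
    (K' : Type*) [Field K'] (ψ : A →+* K')
    (f : Polynomial A) (hd : 1 ≤ f.natDegree)
    (hlead : ψ f.leadingCoeff ≠ 0)
    (hsep : (f.map ψ).Separable) :
    (f.map (algebraMap A K)).Separable ∧
      ∃ e : (f.map ψ).Gal →* (f.map (algebraMap A K)).Gal, Function.Injective e := by
  obtain ⟨S, ψ', hS, rfl, hunit⟩ := exists_isIntegrallyClosed_subalgebra_lift K ψ
  let : Algebra S K' := ψ'.toAlgebra
  have hu : IsUnit (f.map (algebraMap A S)).leadingCoeff := by
    rw [leadingCoeff_map_of_injective (FaithfulSMul.algebraMap_injective A S)]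
    exact hunit _ hlead
  have hK' : (f.map (algebraMap A S)).map (algebraMap S K') = f.map (ψ'.comp (algebraMap A S)) :=
    map_map _ _ f
  have hK : (f.map (algebraMap A S)).map (algebraMap S K) = f.map (algebraMap A K) := by
    rw [map_map, ← IsScalarTower.algebraMap_eq]
  rw [← hK'] at hsep ⊢
  rw [← hK]
  exact separable_and_exists_injective_gal_of_isUnit_leadingCoeff K K' hu hsep
end
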